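/- arXiv:1702.07812 — 5 statements merged into one kernel-verified Lean document; each statement's English description precedes it below -/
import Mathlib

section
/- Let V be a ℚ-vector space and W ⊆ ℂ[[X]] a ℂ-subspace of finite dimension N. Let d : ℕ → V be a sequence such that for every ℚ-linear map α : V → ℂ the formal power series ∑_{m≥0} α(d(m))·X^m lies in W. Then the ℚ-subspace of V spanned by {d(m) : m ∈ ℕ} has dimension at most N. -/
/-!
Choose a basis `b` of the span of the `d i` among the `d i` themselves, and for each `x ∈ b` a
functional that is `1` at `x` and `0` on the rest of `b`. The series attached to these functionals
lie in `W` and are linearly independent, because their coefficients at the indices of the elements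
of `b` form an identity matrix. Hence `b` has at most `dim W` elements.
-/

noncomputable section

universe u v

theorem exists_linearMap_apply_eq_of_linearIndependent {K V V' κ : Type*} [DivisionRing K]
    [AddCommGroup V] [Module K V] [AddCommMonoid V'] [Module K V'] {v : κ → V}
    (hv : LinearIndependent K v) (y : κ → V') : ∃ g : V →ₗ[K] V', ∀ k, g (v k) = y k := by
  obtain ⟨r, hr⟩ := (Finsupp.linearCombination K v).exists_leftInverse_of_injective
    (LinearMap.ker_eq_bot.2 hv)
  refine ⟨Finsupp.linearCombination K y ∘ₗ r, fun k => ?_⟩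
  have hrv : r (v k) = Finsupp.single k 1 := by
    simpa using LinearMap.congr_fun hr (Finsupp.single k 1)
  simp [hrv]

theorem span_of_modular_coefficients_finiteDimensional_general
    {K L ι : Type*} {V : Type u} {M : Type v}
    [DivisionRing K] [Ring L] [Nontrivial L] [Module K L]
    [AddCommGroup V] [Module K V] [AddCommGroup M] [Module L M]
    (c : ι → M →ₗ[L] L) (d : ι → V)
    (h : ∀ α : V →ₗ[K] L, ∃ w : M, ∀ i, c i w = α (d i)) :
    Cardinal.lift.{v} (Module.rank K (Submodule.span K (Set.range d))) ≤
      Cardinal.lift.{u} (Module.rank L M) := by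
  classical
  obtain ⟨b, hb, hspan, hli⟩ := exists_linearIndependent K (Set.range d)
  choose i hi using fun x : b => hb x.2
  choose α hα using fun x : b =>
    exists_linearMap_apply_eq_of_linearIndependent hli (Pi.single x (1 : L))
  choose w hw using fun x => h (α x)
  have hcw (x y : b) : c (i x) (w y) = Pi.single (M := fun _ => L) y 1 x := by
    rw [hw, hi, hα]
  have hwli : LinearIndependent L w :=
    .of_pairwise_dual_eq_zero_one w (fun x => c (i x))
      (fun x y hxy => by simp [hcw, hxy]) (fun x => by simp [hcw])
  rw [← hspan, rank_span_set hli]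
  exact hwli.cardinal_lift_le_rank

theorem span_of_modular_coefficients_finiteDimensional
    (V : Type*) [AddCommGroup V] [Module ℚ V]
    (W : Submodule ℂ (PowerSeries ℂ)) (N : ℕ)
    (hW : Module.rank ℂ W = (N : Cardinal))
    (d : ℕ → V)
    (h : ∀ α : V →ₗ[ℚ] ℂ, (PowerSeries.mk fun m => α (d m)) ∈ W) :
    Module.rank ℚ (Submodule.span ℚ (Set.range d)) ≤ (N : Cardinal) := by
  simpa [hW] using span_of_modular_coefficients_finiteDimensional_general
    (fun m => PowerSeries.coeff m ∘ₗ W.subtype) d fun α => ⟨⟨_, h α⟩, fun m => by simp⟩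
end
end

section
/- For every τ in the upper half-plane ℍ and every z ∈ ℂ, with q = e^{2πiτ}, one has the identity i·∑_{n∈ℤ} e^{πi(n+1/2)²τ + 2πi(n+1/2)(z−1/2)} = ( e^{πiτ/12}·∏_{n≥1}(1−qⁿ) ) · ( e^{πiτ/6}·(e^{πiz} − e^{−πiz})·∏_{n≥1}(1 − e^{2πiz}qⁿ)(1 − e^{−2πiz}qⁿ) ); that is, i·ϑ₁(τ,z) = η(τ)·Θ(τ,z), where ϑ₁(τ,z) = ∑_{n∈ℤ} e^{πi(n+1/2)²τ + 2πi(n+1/2)(z−1/2)} is the classical Jacobi theta function, η(τ) = e^{πiτ/12}∏_{n≥1}(1−e^{2πinτ}) is the Dedekind eta function, and Θ is the displayed product. The series and all products converge absolutely. -/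
/-!
Put `p = e^{πiτ}`. Up to the factor `e^{πiτ/4 + πi(z-1/2)}`, the series `ϑ₁(τ,z)` is
`∑_{n ∈ ℤ} p^{n²} xⁿ` with `x = -p e^{2πiz}`, to which the Jacobi triple product applies:
`∑_{n ∈ ℤ} p^{n²} xⁿ = (p²; p²)_∞ (-xp; p²)_∞ (-x⁻¹p; p²)_∞`.

The triple product is the limit of a finite identity. In the `q`-binomial theorem for `(a; p²)_{2N}`
with `a = -xp^{1-2N}`, inverting the first `N` factors turns the product into a multiple of
`(-xp; p²)_N (-x⁻¹p; p²)_N`, while completing the square in the exponents turns the sum into the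
same multiple of `∑_{|n| ≤ N} p^{n²} xⁿ [2N, N+n]_{p²}`. As `N → ∞` the Gaussian binomials stay
bounded and tend to `1 / (p²; p²)_∞`, so the sum converges by dominated convergence.
-/

noncomputable section

open Filter Topology Finset

section Finite

/-- The finite `q`-Pochhammer symbol `(a; q)_n`. -/
def qPochhammer {R : Type*} [CommRing R] (a q : R) (n : ℕ) : R := ∏ k ∈ range n, (1 - a * q ^ k)

/-- The Gaussian binomial coefficient `[n, k]_q`. The recursion is the `q`-Pascal rule, so that no
division is needed and roots of unity `q` are allowed. -/
def gaussBinom {R : Type*} [Semiring R] (q : R) : ℕ → ℕ → R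
  | _, 0 => 1
  | 0, _ + 1 => 0
  | n + 1, k + 1 => gaussBinom q n k + q ^ (k + 1) * gaussBinom q n (k + 1)

section Semiring

variable {R : Type*} [Semiring R] (q : R)

lemma gaussBinom_zero_right (n : ℕ) : gaussBinom q n 0 = 1 := by
  cases n <;> rfl

lemma gaussBinom_succ_succ (n k : ℕ) :
    gaussBinom q (n + 1) (k + 1) = gaussBinom q n k + q ^ (k + 1) * gaussBinom q n (k + 1) :=
  rfl

lemma gaussBinom_eq_zero_of_lt {n k : ℕ} (h : n < k) : gaussBinom q n k = 0 := by
  induction n generalizing k with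
  | zero => obtain ⟨k, rfl⟩ := Nat.exists_eq_add_of_lt h; rfl
  | succ n ih =>
    obtain ⟨k, rfl⟩ := Nat.exists_eq_succ_of_ne_zero (Nat.ne_zero_of_lt h)
    rw [Nat.succ_eq_add_one, gaussBinom_succ_succ, ih (by omega), ih (by omega), mul_zero, add_zero]

lemma gaussBinom_self (n : ℕ) : gaussBinom q n n = 1 := by
  induction n with
  | zero => rfl
  | succ n ih =>
    rw [gaussBinom_succ_succ, ih, gaussBinom_eq_zero_of_lt q n.lt_succ_self, mul_zero, add_zero]

end Semiring

theorem prod_one_add_mul_pow_eq_sum_gaussBinom {R : Type*} [CommSemiring R] (x q : R) (n : ℕ) :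
    ∏ k ∈ range n, (1 + x * q ^ k) =
      ∑ j ∈ range (n + 1), q ^ j.choose 2 * gaussBinom q n j * x ^ j := by
  induction n generalizing x with
  | zero => simp [gaussBinom_zero_right]
  | succ n ih =>
    set t : ℕ → R := fun j => q ^ j.choose 2 * gaussBinom q n j * (x * q) ^ j with ht
    have sum_shift : ∑ j ∈ range (n + 1), t j = ∑ j ∈ range (n + 1), t (j + 1) + 1 := by
      have h := sum_range_succ t (n + 1)
      rw [sum_range_succ'] at h
      simpa [ht, gaussBinom_eq_zero_of_lt q n.lt_succ_self, gaussBinom_zero_right] using h.symm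
    have prod_shift : ∏ k ∈ range n, (1 + x * q ^ (k + 1)) = ∑ j ∈ range (n + 1), t j := by
      rw [ht, ← ih]
      simp only [pow_succ', mul_assoc]
    have term_succ (j : ℕ) : q ^ (j + 1).choose 2 * gaussBinom q (n + 1) (j + 1) * x ^ (j + 1) =
        t (j + 1) + t j * x := by
      have choose_succ : (j + 1).choose 2 = j + j.choose 2 := by simp [Nat.choose_succ_succ' j 1]
      simp only [ht, gaussBinom_succ_succ, choose_succ]
      ring
    calc ∏ k ∈ range (n + 1), (1 + x * q ^ k)
        = ∑ j ∈ range (n + 1), t j + (∑ j ∈ range (n + 1), t j) * x := by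
          rw [prod_range_succ', prod_shift, pow_zero, mul_one, mul_add, mul_one]
      _ = ∑ j ∈ range (n + 1), (t (j + 1) + t j * x) + 1 := by
          nth_rewrite 1 [sum_shift]
          rw [sum_mul, sum_add_distrib, add_right_comm]
      _ = _ := by simp [sum_range_succ' _ (n + 1), term_succ, gaussBinom_zero_right]

section CommRing

variable {R : Type*} [CommRing R]

lemma qPochhammer_succ (a q : R) (n : ℕ) :
    qPochhammer a q (n + 1) = qPochhammer a q n * (1 - a * q ^ n) :=
  prod_range_succ ..

lemma qPochhammer_add (a q : R) (m n : ℕ) :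
    qPochhammer a q (m + n) = qPochhammer a q m * qPochhammer (a * q ^ m) q n := by
  simp only [qPochhammer, prod_range_add, pow_add, mul_assoc]

lemma gaussBinom_add_mul_qPochhammer (q : R) (m n : ℕ) :
    gaussBinom q (m + n) m * (qPochhammer q q m * qPochhammer q q n) = qPochhammer q q (m + n) := by
  induction m generalizing n with
  | zero => simp [gaussBinom_zero_right, qPochhammer]
  | succ m ihm =>
    induction n with
    | zero => simp [gaussBinom_self, qPochhammer]
    | succ n ihn =>
      have left := ihm (n + 1)
      rw [show m + (n + 1) = m + 1 + n by ring, qPochhammer_succ q q n] at left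
      rw [qPochhammer_succ q q m] at ihn
      rw [← add_assoc, gaussBinom_succ_succ, qPochhammer_succ q q m, qPochhammer_succ q q n,
        qPochhammer_succ q q (m + 1 + n)]
      linear_combination (1 - q * q ^ m) * left + q ^ (m + 1) * (1 - q * q ^ n) * ihn

end CommRing

section Field

variable {K : Type*} [Field K]

lemma qPochhammer_eq_mul_qPochhammer_inv {a q : K} (ha : a ≠ 0) (hq : q ≠ 0) (n : ℕ) :
    qPochhammer a q n =
      (-a) ^ n * q ^ n.choose 2 * qPochhammer (a⁻¹ * q ^ (1 - n : ℤ)) q n := by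
  have factor (k : ℕ) : 1 - a * q ^ k = -a * q ^ k * (1 - a⁻¹ * (q ^ k)⁻¹) := by
    field_simp
    ring
  have reflect : ∏ k ∈ range n, (1 - a⁻¹ * (q ^ k)⁻¹) =
      qPochhammer (a⁻¹ * q ^ (1 - n : ℤ)) q n := by
    rw [qPochhammer, ← prod_range_reflect]
    refine prod_congr rfl fun k hk => ?_
    have hkn : ((n - 1 - k : ℕ) : ℤ) = n - 1 - k := by grind
    rw [mul_assoc, ← zpow_natCast, ← zpow_natCast, ← zpow_neg, ← zpow_add₀ hq, hkn]
    congr 3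
    ring
  simp only [qPochhammer, factor, prod_mul_distrib, prod_const, card_range]
  rw [reflect, prod_pow_eq_pow_sum, sum_range_id, ← Nat.choose_two_right, qPochhammer]

lemma sq_zpow (q : K) (m : ℤ) : (q ^ 2) ^ m = q ^ (2 * m) := by
  rw [zpow_mul, zpow_ofNat]

lemma sq_pow_choose_two (q : K) (n : ℕ) : (q ^ 2) ^ n.choose 2 = q ^ ((n : ℤ) * (n - 1)) := by
  rw [← pow_mul, Nat.choose_two_right, Nat.mul_div_cancel' n.even_mul_pred_self.two_dvd,
    ← zpow_natCast]
  cases n <;> simp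

lemma mul_zpow_pow {q : K} (x : K) (m : ℤ) (n : ℕ) :
    (x * q ^ m) ^ n = x ^ n * q ^ (m * n) := by
  rw [mul_pow, zpow_mul, zpow_natCast]

lemma qPochhammer_two_mul_eq_mul {q x : K} (hq : q ≠ 0) (hx : x ≠ 0) (N : ℕ) :
    qPochhammer (-(x * q ^ (1 - 2 * N : ℤ))) (q ^ 2) (2 * N) =
      x ^ N * q ^ (-(N : ℤ) ^ 2) *
        (qPochhammer (-(x * q)) (q ^ 2) N * qPochhammer (-(x⁻¹ * q)) (q ^ 2) N) := by
  set y : K := x * q ^ (1 - 2 * N : ℤ) with hy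
  have hy0 : y ≠ 0 := mul_ne_zero hx (zpow_ne_zero _ hq)
  have inverted_base : (-y)⁻¹ * (q ^ 2) ^ (1 - N : ℤ) = -(x⁻¹ * q) := by
    rw [inv_neg, neg_mul, hy, mul_inv, mul_assoc, sq_zpow, ← zpow_neg, ← zpow_add₀ hq]
    ring_nf
    simp
  have lower_half : qPochhammer (-y) (q ^ 2) N =
      x ^ N * q ^ (-(N : ℤ) ^ 2) * qPochhammer (-(x⁻¹ * q)) (q ^ 2) N := by
    rw [qPochhammer_eq_mul_qPochhammer_inv (neg_ne_zero.mpr hy0) (pow_ne_zero 2 hq),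
      inverted_base, neg_neg, hy, mul_zpow_pow, sq_pow_choose_two, mul_assoc (x ^ N),
      ← zpow_add₀ hq]
    ring_nf
  have upper_base : -y * (q ^ 2) ^ N = -(x * q) := by
    rw [neg_mul, hy, mul_assoc, ← zpow_natCast (q ^ 2), sq_zpow, ← zpow_add₀ hq]
    simp
  rw [two_mul, qPochhammer_add, lower_half, upper_base]
  ring

lemma sq_pow_choose_two_mul_pow {q x : K} (hq : q ≠ 0) (hx : x ≠ 0) (N j : ℕ) :
    (q ^ 2) ^ j.choose 2 * (x * q ^ (1 - 2 * N : ℤ)) ^ j =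
      x ^ N * q ^ (-(N : ℤ) ^ 2) * (q ^ ((j - N : ℤ) ^ 2) * x ^ (j - N : ℤ)) := by
  have x_pow : x ^ j = x ^ N * x ^ (j - N : ℤ) := by
    rw [← zpow_natCast, ← zpow_natCast, ← zpow_add₀ hx, add_sub_cancel]
  have q_pow : q ^ ((j : ℤ) * (j - 1)) * q ^ ((1 - 2 * N : ℤ) * j) =
      q ^ (-(N : ℤ) ^ 2) * q ^ ((j - N : ℤ) ^ 2) := by
    rw [← zpow_add₀ hq, ← zpow_add₀ hq]
    ring_nf
  rw [sq_pow_choose_two, mul_zpow_pow, x_pow]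
  linear_combination x ^ N * x ^ (j - N : ℤ) * q_pow

lemma qPochhammer_mul_qPochhammer_eq_sum_range {q x : K} (hq : q ≠ 0) (hx : x ≠ 0) (N : ℕ) :
    qPochhammer (-(x * q)) (q ^ 2) N * qPochhammer (-(x⁻¹ * q)) (q ^ 2) N =
      ∑ j ∈ range (2 * N + 1),
        q ^ ((j - N : ℤ) ^ 2) * x ^ (j - N : ℤ) * gaussBinom (q ^ 2) (2 * N) j := by
  set y : K := x * q ^ (1 - 2 * N : ℤ) with hy
  have scale_ne_zero : x ^ N * q ^ (-(N : ℤ) ^ 2) ≠ 0 :=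
    mul_ne_zero (pow_ne_zero N hx) (zpow_ne_zero _ hq)
  refine mul_left_cancel₀ scale_ne_zero ?_
  calc x ^ N * q ^ (-(N : ℤ) ^ 2) *
        (qPochhammer (-(x * q)) (q ^ 2) N * qPochhammer (-(x⁻¹ * q)) (q ^ 2) N)
      = ∏ k ∈ range (2 * N), (1 + y * (q ^ 2) ^ k) := by
        rw [← qPochhammer_two_mul_eq_mul hq hx]
        simp only [qPochhammer, neg_mul, sub_neg_eq_add, hy]
    _ = ∑ j ∈ range (2 * N + 1), (q ^ 2) ^ j.choose 2 * gaussBinom (q ^ 2) (2 * N) j * y ^ j :=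
        prod_one_add_mul_pow_eq_sum_gaussBinom y (q ^ 2) (2 * N)
    _ = _ := by
        rw [mul_sum]
        refine sum_congr rfl fun j _ => ?_
        linear_combination gaussBinom (q ^ 2) (2 * N) j * sq_pow_choose_two_mul_pow hq hx N j

theorem qPochhammer_mul_qPochhammer_eq_sum_Icc {q x : K} (hq : q ≠ 0) (hx : x ≠ 0) (N : ℕ) :
    qPochhammer (-(x * q)) (q ^ 2) N * qPochhammer (-(x⁻¹ * q)) (q ^ 2) N =
      ∑ n ∈ Icc (-(N : ℤ)) N, q ^ (n ^ 2) * x ^ n *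
        gaussBinom (q ^ 2) ((N + n).toNat + (N - n).toNat) (N + n).toNat := by
  rw [qPochhammer_mul_qPochhammer_eq_sum_range hq hx]
  refine sum_bij' (fun j _ => (j - N : ℤ)) (fun n _ => (N + n).toNat) ?_ ?_ ?_ ?_ ?_
  · grind
  · grind
  · grind
  · grind
  · intro j hj
    have hsum : (N + (j - N) : ℤ).toNat + (N - (j - N) : ℤ).toNat = 2 * N := by grind
    have hj' : (N + (j - N) : ℤ).toNat = j := by omega
    rw [hsum, hj']

end Field

end Finite

section Infinite

variable {𝕜 : Type*} [NormedField 𝕜]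

/-- The infinite `q`-Pochhammer symbol `(a; q)_∞`, meaningful for `‖q‖ < 1`. -/
def qPochhammerInf (a q : 𝕜) : 𝕜 := ∏' k : ℕ, (1 - a * q ^ k)

lemma qPochhammerInf_mul_self (a q : 𝕜) :
    qPochhammerInf (a * q) q = ∏' k : ℕ, (1 - a * q ^ (k + 1)) := by
  simp only [qPochhammerInf, pow_succ', mul_assoc]

lemma one_sub_self_mul_pow_ne_zero {q : 𝕜} (hq : ‖q‖ < 1) (k : ℕ) : 1 - q * q ^ k ≠ 0 := by
  intro h
  have norm_eq : ‖q ^ (k + 1)‖ = 1 := by rw [pow_succ', ← sub_eq_zero.mp h, norm_one]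
  rw [norm_pow] at norm_eq
  exact (pow_lt_one₀ (norm_nonneg q) hq k.succ_ne_zero).ne norm_eq

lemma qPochhammer_self_ne_zero {q : 𝕜} (hq : ‖q‖ < 1) (n : ℕ) : qPochhammer q q n ≠ 0 :=
  prod_ne_zero_iff.mpr fun k _ => one_sub_self_mul_pow_ne_zero hq k

lemma gaussBinom_add_eq_div {q : 𝕜} (hq : ‖q‖ < 1) (m n : ℕ) :
    gaussBinom q (m + n) m = qPochhammer q q (m + n) / (qPochhammer q q m * qPochhammer q q n) :=
  eq_div_of_mul_eq (mul_ne_zero (qPochhammer_self_ne_zero hq m) (qPochhammer_self_ne_zero hq n))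
    (gaussBinom_add_mul_qPochhammer q m n)

lemma summable_norm_neg_mul_pow {q : 𝕜} (hq : ‖q‖ < 1) (a : 𝕜) :
    Summable fun k : ℕ => ‖-(a * q ^ k)‖ := by
  simpa using (summable_geometric_of_lt_one (norm_nonneg _) hq).mul_left ‖a‖

lemma summable_norm_pow_sq_mul_pow {q : 𝕜} (hq : ‖q‖ < 1) (x : 𝕜) :
    Summable fun n : ℕ => ‖q ^ n ^ 2 * x ^ n‖ := by
  have ratio_lim : Tendsto (fun n : ℕ => ‖q ^ (2 * n + 1) * x‖) atTop (𝓝 0) := by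
    have pow_lim := (tendsto_pow_atTop_nhds_zero_of_norm_lt_one hq).comp
      (tendsto_atTop_mono (fun n : ℕ => (by omega : n ≤ 2 * n + 1)) tendsto_id)
    simpa using (pow_lim.mul_const x).norm
  refine summable_of_ratio_norm_eventually_le one_half_lt_one ?_
  filter_upwards [ratio_lim.eventually_le_const one_half_pos] with n hn
  rw [norm_norm, norm_norm]
  calc ‖q ^ (n + 1) ^ 2 * x ^ (n + 1)‖
      = ‖q ^ (2 * n + 1) * x‖ * ‖q ^ n ^ 2 * x ^ n‖ := by rw [← norm_mul]; ring_nf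
    _ ≤ 1 / 2 * ‖q ^ n ^ 2 * x ^ n‖ := by gcongr

lemma summable_norm_zpow_sq_mul_zpow {q : 𝕜} (hq : ‖q‖ < 1) (x : 𝕜) :
    Summable fun n : ℤ => ‖q ^ (n ^ 2) * x ^ n‖ := by
  refine .of_nat_of_neg ?_ ?_
  · exact_mod_cast summable_norm_pow_sq_mul_pow hq x
  · simpa [← zpow_natCast] using summable_norm_pow_sq_mul_pow hq x⁻¹

variable [CompleteSpace 𝕜]

lemma multipliable_one_sub_mul_pow {q : 𝕜} (hq : ‖q‖ < 1) (a : 𝕜) :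
    Multipliable fun k : ℕ => 1 - a * q ^ k := by
  simpa only [sub_eq_add_neg] using
    multipliable_one_add_of_summable (summable_norm_neg_mul_pow hq a)

lemma multipliable_one_sub_mul_pow_succ {q : 𝕜} (hq : ‖q‖ < 1) (a : 𝕜) :
    Multipliable fun k : ℕ => 1 - a * q ^ (k + 1) := by
  simpa only [pow_succ', mul_assoc] using multipliable_one_sub_mul_pow hq (a * q)

lemma qPochhammerInf_eq_one_sub_mul {q : 𝕜} (hq : ‖q‖ < 1) (a : 𝕜) :
    qPochhammerInf a q = (1 - a) * qPochhammerInf (a * q) q := by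
  have split_first := tprod_eq_zero_mul' (f := fun k => 1 - a * q ^ k)
    (multipliable_one_sub_mul_pow_succ hq a)
  rwa [pow_zero, mul_one, ← qPochhammerInf, ← qPochhammerInf_mul_self] at split_first

lemma tendsto_qPochhammer {q : 𝕜} (hq : ‖q‖ < 1) (a : 𝕜) :
    Tendsto (qPochhammer a q) atTop (𝓝 (qPochhammerInf a q)) :=
  (multipliable_one_sub_mul_pow hq a).tendsto_prod_tprod_nat

lemma qPochhammerInf_self_ne_zero {q : 𝕜} (hq : ‖q‖ < 1) : qPochhammerInf q q ≠ 0 := by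
  simpa only [qPochhammerInf, sub_eq_add_neg] using
    tprod_one_add_ne_zero_of_summable
      (fun k => by simpa only [sub_eq_add_neg] using one_sub_self_mul_pow_ne_zero hq k)
      (summable_norm_neg_mul_pow hq q)

lemma tendsto_gaussBinom_add {ι : Type*} {l : Filter ι} {q : 𝕜} (hq : ‖q‖ < 1) {m n : ι → ℕ}
    (hm : Tendsto m l atTop) (hn : Tendsto n l atTop) :
    Tendsto (fun i => gaussBinom q (m i + n i) (m i)) l (𝓝 (qPochhammerInf q q)⁻¹) := by
  have hP := qPochhammerInf_self_ne_zero hq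
  have lim := tendsto_qPochhammer hq q
  have quotient := (lim.comp (tendsto_atTop_mono (fun i => Nat.le_add_right _ (n i)) hm)).div
    ((lim.comp hm).mul (lim.comp hn)) (mul_ne_zero hP hP)
  rw [div_mul_cancel_left₀ hP] at quotient
  simp only [gaussBinom_add_eq_div hq]
  exact quotient

lemma exists_norm_gaussBinom_add_le {q : 𝕜} (hq : ‖q‖ < 1) :
    ∃ C : ℝ, ∀ m n, ‖gaussBinom q (m + n) m‖ ≤ C := by
  have lim := tendsto_qPochhammer hq q
  obtain ⟨B, hB⟩ := lim.norm.bddAbove_range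
  obtain ⟨D, hD⟩ := (lim.inv₀ (qPochhammerInf_self_ne_zero hq)).norm.bddAbove_range
  replace hB (n : ℕ) : ‖qPochhammer q q n‖ ≤ B := hB ⟨n, rfl⟩
  replace hD (n : ℕ) : ‖(qPochhammer q q n)⁻¹‖ ≤ D := hD ⟨n, rfl⟩
  have hB0 : 0 ≤ B := (norm_nonneg _).trans (hB 0)
  have hD0 : 0 ≤ D := (norm_nonneg _).trans (hD 0)
  refine ⟨B * (D * D), fun m n => ?_⟩
  rw [gaussBinom_add_eq_div hq, div_eq_mul_inv, mul_inv, norm_mul, norm_mul]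
  gcongr
  exacts [hB _, hD _, hD _]

lemma tendsto_sum_Icc_mul_gaussBinom {q : 𝕜} (hq : ‖q‖ < 1) {f : ℤ → 𝕜}
    (hf : Summable fun n => ‖f n‖) :
    Tendsto (fun N : ℕ => ∑ n ∈ Icc (-(N : ℤ)) N,
        f n * gaussBinom q ((N + n).toNat + (N - n).toNat) (N + n).toNat)
      atTop (𝓝 ((∑' n, f n) * (qPochhammerInf q q)⁻¹)) := by
  obtain ⟨C, hC⟩ := exists_norm_gaussBinom_add_le hq
  let coeff (N : ℕ) (n : ℤ) : 𝕜 := gaussBinom q ((N + n).toNat + (N - n).toNat) (N + n).toNat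
  have tendsto_toNat (n : ℤ) : Tendsto (fun N : ℕ => (N + n).toNat) atTop atTop :=
    tendsto_atTop_mono (fun N => by omega) (tendsto_sub_atTop_nat n.natAbs)
  have coeff_lim (n : ℤ) : Tendsto (coeff · n) atTop (𝓝 (qPochhammerInf q q)⁻¹) :=
    tendsto_gaussBinom_add hq (tendsto_toNat n) (tendsto_toNat (-n))
  rw [← tsum_mul_right]
  refine Tendsto.congr (fun N => (sum_eq_tsum_indicator _ _).symm) ?_
  refine tendsto_tsum_of_dominated_convergence (hf.mul_right C) (fun n => ?_)
    (.of_forall fun N n => ?_)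
  · refine ((coeff_lim n).const_mul (f n)).congr' ?_
    filter_upwards [eventually_ge_atTop n.natAbs] with N hN
    have n_mem : n ∈ Icc (-(N : ℤ)) N := mem_Icc.mpr (by omega)
    exact (Set.indicator_of_mem (mem_coe.mpr n_mem) fun n => f n * coeff N n).symm
  · refine (norm_indicator_le_norm_self (fun n => f n * coeff N n) n).trans ?_
    rw [norm_mul]
    gcongr
    exact hC _ _

theorem hasSum_zpow_sq_mul_zpow {q x : 𝕜} (hq : ‖q‖ < 1) (hx : x ≠ 0) :
    HasSum (fun n : ℤ => q ^ (n ^ 2) * x ^ n)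
      (qPochhammerInf (q ^ 2) (q ^ 2) * qPochhammerInf (-(x * q)) (q ^ 2) *
        qPochhammerInf (-(x⁻¹ * q)) (q ^ 2)) := by
  rcases eq_or_ne q 0 with rfl | hq0
  · convert hasSum_single (f := fun n : ℤ => (0 : 𝕜) ^ (n ^ 2) * x ^ n) 0
      (by simp +contextual [zero_zpow]) using 1
    simp [qPochhammerInf]
  have hq2 : ‖q ^ 2‖ < 1 := by simpa using pow_lt_one₀ (norm_nonneg q) hq two_ne_zero
  have hsum := summable_norm_zpow_sq_mul_zpow hq x
  have sum_lim := tendsto_sum_Icc_mul_gaussBinom hq2 hsum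
  simp only [← qPochhammer_mul_qPochhammer_eq_sum_Icc hq0 hx] at sum_lim
  have prod_lim := (tendsto_qPochhammer hq2 (-(x * q))).mul (tendsto_qPochhammer hq2 (-(x⁻¹ * q)))
  have tsum_eq := tendsto_nhds_unique sum_lim prod_lim
  rw [mul_inv_eq_iff_eq_mul₀ (qPochhammerInf_self_ne_zero hq2)] at tsum_eq
  rw [mul_assoc, mul_comm, ← tsum_eq]
  exact hsum.of_norm.hasSum

end Infinite

section Theta

open Complex (I exp)
open scoped Real

theorem jacobiTheta₂_eq_qPochhammerInf (z : ℂ) {τ : ℂ} (hτ : 0 < τ.im) :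
    jacobiTheta₂ z τ =
      qPochhammerInf (exp (2 * π * I * τ)) (exp (2 * π * I * τ)) *
        qPochhammerInf (-exp (2 * π * I * z + π * I * τ)) (exp (2 * π * I * τ)) *
        qPochhammerInf (-exp (-(2 * π * I * z) + π * I * τ)) (exp (2 * π * I * τ)) := by
  have nome_norm_lt_one : ‖exp (π * I * τ)‖ < 1 := by
    simpa [Complex.norm_exp] using mul_pos Real.pi_pos hτ
  have nome_sq : exp (π * I * τ) ^ 2 = exp (2 * π * I * τ) := by
    rw [← Complex.exp_nat_mul]
    ring_nf
  have term_eq (n : ℤ) : jacobiTheta₂_term n z τ =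
      exp (π * I * τ) ^ (n ^ 2) * exp (2 * π * I * z) ^ n := by
    rw [jacobiTheta₂_term, ← Complex.exp_int_mul, ← Complex.exp_int_mul, ← Complex.exp_add]
    push_cast
    ring_nf
  have triple := hasSum_zpow_sq_mul_zpow nome_norm_lt_one (Complex.exp_ne_zero (2 * π * I * z))
  rw [nome_sq, ← Complex.exp_neg, ← Complex.exp_add, ← Complex.exp_add] at triple
  simpa only [jacobiTheta₂, term_eq] using triple.tsum_eq

lemma jacobiTheta₂_sub_half_add_half (z : ℂ) {τ : ℂ} (hτ : 0 < τ.im) :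
    jacobiTheta₂ (z - 1 / 2 + τ / 2) τ =
      qPochhammerInf (exp (2 * π * I * τ)) (exp (2 * π * I * τ)) *
        qPochhammerInf (exp (2 * π * I * z) * exp (2 * π * I * τ)) (exp (2 * π * I * τ)) *
        qPochhammerInf (exp (-(2 * π * I * z))) (exp (2 * π * I * τ)) := by
  have neg_exp_add : -exp (2 * π * I * (z - 1 / 2 + τ / 2) + π * I * τ) =
      exp (2 * π * I * z + 2 * π * I * τ) := by
    rw [← Complex.exp_add_pi_mul_I]
    ring_nf
  have neg_exp_sub : -exp (-(2 * π * I * (z - 1 / 2 + τ / 2)) + π * I * τ) =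
      exp (-(2 * π * I * z)) := by
    rw [← Complex.exp_antiperiodic.sub_eq]
    ring_nf
  rw [jacobiTheta₂_eq_qPochhammerInf _ hτ, neg_exp_add, neg_exp_sub, Complex.exp_add]

lemma exp_half_shift_eq_mul_jacobiTheta₂_term (τ z : ℂ) (n : ℤ) :
    exp (π * I * (n + 1 / 2) ^ 2 * τ + 2 * π * I * (n + 1 / 2) * (z - 1 / 2)) =
      exp (π * I * τ / 4 + π * I * (z - 1 / 2)) *
        jacobiTheta₂_term n (z - 1 / 2 + τ / 2) τ := by
  rw [jacobiTheta₂_term, ← Complex.exp_add]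
  ring_nf

lemma I_mul_exp_mul_one_sub_exp (τ z : ℂ) :
    I * exp (π * I * τ / 4 + π * I * (z - 1 / 2)) * (1 - exp (-(2 * π * I * z))) =
      exp (π * I * τ / 12) * exp (π * I * τ / 6) *
        (exp (π * I * z) - exp (-(π * I * z))) := by
  have I_eq : I = exp (π / 2 * I) := Complex.exp_pi_div_two_mul_I.symm
  nth_rewrite 1 [I_eq]
  simp only [mul_sub, mul_one, ← Complex.exp_add]
  ring_nf

end Theta

/-- `i ⬝ ϑ₁ = η ⬝ Θ`: for `τ` in the upper half plane and `z ∈ ℂ` one has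
`i ∑_{n ∈ ℤ} e^{πi(n+1/2)²τ + 2πi(n+1/2)(z-1/2)}
  = (e^{πiτ/12} ∏_{n≥1}(1-qⁿ)) ⬝ (e^{πiτ/6}(e^{πiz}-e^{-πiz}) ∏_{n≥1}(1-e^{2πiz}qⁿ)(1-e^{-2πiz}qⁿ))`,
with all series and products converging absolutely. -/
theorem jacobi_theta_eq_eta_mul_Theta (τ : ℂ) (hτ : 0 < τ.im) (z : ℂ) :
    Summable (fun n : ℤ =>
      Complex.exp ((Real.pi : ℂ) * Complex.I * ((n : ℂ) + 1 / 2) ^ 2 * τ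
        + 2 * (Real.pi : ℂ) * Complex.I * ((n : ℂ) + 1 / 2) * (z - 1 / 2))) ∧
    Multipliable (fun n : ℕ =>
      (1 : ℂ) - Complex.exp (2 * (Real.pi : ℂ) * Complex.I * τ) ^ (n + 1)) ∧
    Multipliable (fun n : ℕ =>
      ((1 : ℂ) - Complex.exp (2 * (Real.pi : ℂ) * Complex.I * z) *
          Complex.exp (2 * (Real.pi : ℂ) * Complex.I * τ) ^ (n + 1)) *
        (1 - Complex.exp (-(2 * (Real.pi : ℂ) * Complex.I * z)) *
          Complex.exp (2 * (Real.pi : ℂ) * Complex.I * τ) ^ (n + 1))) ∧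
    Complex.I * ∑' n : ℤ,
        Complex.exp ((Real.pi : ℂ) * Complex.I * ((n : ℂ) + 1 / 2) ^ 2 * τ
          + 2 * (Real.pi : ℂ) * Complex.I * ((n : ℂ) + 1 / 2) * (z - 1 / 2)) =
      (Complex.exp ((Real.pi : ℂ) * Complex.I * τ / 12) *
          ∏' n : ℕ, ((1 : ℂ) - Complex.exp (2 * (Real.pi : ℂ) * Complex.I * τ) ^ (n + 1))) *
        (Complex.exp ((Real.pi : ℂ) * Complex.I * τ / 6) *
          (Complex.exp ((Real.pi : ℂ) * Complex.I * z) -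
            Complex.exp (-((Real.pi : ℂ) * Complex.I * z))) *
          ∏' n : ℕ,
            (((1 : ℂ) - Complex.exp (2 * (Real.pi : ℂ) * Complex.I * z) *
                Complex.exp (2 * (Real.pi : ℂ) * Complex.I * τ) ^ (n + 1)) *
              (1 - Complex.exp (-(2 * (Real.pi : ℂ) * Complex.I * z)) *
                Complex.exp (2 * (Real.pi : ℂ) * Complex.I * τ) ^ (n + 1)))) := by
  have theta_eq := jacobiTheta₂_sub_half_add_half z hτ
  have prefactor_eq := I_mul_exp_mul_one_sub_exp τ z
  simp only [exp_half_shift_eq_mul_jacobiTheta₂_term]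
  set q := Complex.exp (2 * Real.pi * Complex.I * τ)
  set w := Complex.exp (2 * Real.pi * Complex.I * z)
  set w' := Complex.exp (-(2 * Real.pi * Complex.I * z))
  have hq : ‖q‖ < 1 := UpperHalfPlane.norm_exp_two_pi_I_lt_one ⟨τ, hτ⟩
  have euler_eq : qPochhammerInf q q = ∏' n : ℕ, (1 - q ^ (n + 1)) := by
    simpa only [one_mul] using qPochhammerInf_mul_self 1 q
  have hw := multipliable_one_sub_mul_pow_succ hq w
  have hw' := multipliable_one_sub_mul_pow_succ hq w'
  refine ⟨((summable_jacobiTheta₂_term_iff _ τ).mpr hτ).mul_left _,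
    ModularForm.multipliable_one_sub_pow hq, hw.mul hw', ?_⟩
  rw [tsum_mul_left, ← jacobiTheta₂, theta_eq, qPochhammerInf_eq_one_sub_mul hq w',
    hw.tprod_mul hw', ← qPochhammerInf_mul_self, ← qPochhammerInf_mul_self, ← euler_eq]
  linear_combination
    qPochhammerInf q q * qPochhammerInf (w * q) q * qPochhammerInf (w' * q) q * prefactor_eq
end
end

section
/- Let 𝔟 be a nonzero fractional O_k-ideal of an imaginary quadratic field k. Then the hermitian form ⟨b₁,b₂⟩ = b₁·conj(b₂)/N(𝔟) on 𝔟 satisfies: (a) ⟨b₁,b₂⟩ ∈ O_k for all b₁, b₂ ∈ 𝔟; (b) it is positive definite, i.e. ⟨b,b⟩ ∈ ℚ and ⟨b,b⟩ > 0 for every nonzero b ∈ 𝔟; (c) 𝔟 is self-dual with respect to it, i.e. {x ∈ k : x·conj(b)/N(𝔟) ∈ O_k for all b ∈ 𝔟} = 𝔟. Moreover this form is unique: if c ∈ ℚ with c > 0 satisfies {x ∈ k : c·x·conj(b) ∈ O_k for all b ∈ 𝔟} = 𝔟, then c = 1/N(𝔟). -/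
/-!
Statement 12: the canonical self-dual positive definite hermitian form
`⟨b₁,b₂⟩ = b₁ conj(b₂)/N(𝔟)` on a nonzero fractional ideal `𝔟` of an imaginary quadratic
field, and its uniqueness.
-/

noncomputable section

open NumberField

/-!
For a number field `K` Galois over `ℚ`, a fractional ideal satisfies `∏ σ, σ(𝔟) = (N(𝔟))`: this
is the norm formula for elements when `𝔟` is principal, some power `𝔟 ^ n` is always principal,
and fractional ideals have unique `n`-th roots. In the quadratic case it reads `𝔟 · σ(𝔟) = (N(𝔟))`.
The dual of `𝔟` for the form `c · x · σ(y)` is the inverse ideal of `c · σ(𝔟)`, so `𝔟` is self-dual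
exactly when `(c) · 𝔟 · σ(𝔟) = (c · N(𝔟))` is the unit ideal, that is, when `|c| · N(𝔟) = 1`.
Positivity holds because `σ` becomes complex conjugation under any complex embedding.
-/

namespace SesquilinearDual

open FractionalIdeal
open scoped nonZeroDivisors

theorem spanSingleton_prod {R P ι : Type*} [CommRing R] {S : Submonoid R} [CommRing P]
    [Algebra R P] [IsLocalization S P] (s : Finset ι) (f : ι → P) :
    spanSingleton S (∏ i ∈ s, f i) = ∏ i ∈ s, spanSingleton S (f i) :=
  map_prod (⟨⟨spanSingleton S, spanSingleton_one⟩, fun x y ↦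
    (spanSingleton_mul_spanSingleton x y).symm⟩ : P →* FractionalIdeal S P) f s

section DedekindDomain

variable {A K : Type*} [CommRing A] [Field K] [Algebra A K] [IsFractionRing A K]

theorem le_one_of_pow_le_one [IsIntegrallyClosed A] {I : FractionalIdeal A⁰ K} {n : ℕ}
    (hn : n ≠ 0) (h : I ^ n ≤ 1) : I ≤ 1 := by
  intro x hx
  have hxn : x ^ n ∈ (1 : FractionalIdeal A⁰ K) := by
    refine h ?_
    rw [← mem_coe, coe_pow]
    exact Submodule.pow_mem_pow _ hx n
  obtain ⟨a, ha⟩ := (mem_one_iff _).1 hxn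
  exact (mem_one_iff _).2 (IsIntegrallyClosed.exists_algebraMap_eq_of_isIntegral_pow hn.bot_lt
    (ha ▸ isIntegral_algebraMap))

variable [IsDedekindDomain A]

theorem eq_one_of_pow_eq_one {I : FractionalIdeal A⁰ K} {n : ℕ} (hn : n ≠ 0) (h : I ^ n = 1) :
    I = 1 := by
  have hI : I ≠ 0 := by
    rintro rfl
    simp [hn] at h
  refine le_antisymm (le_one_of_pow_le_one hn h.le) ?_
  have hinv : I⁻¹ ≤ 1 := le_one_of_pow_le_one hn (by rw [inv_pow, h, inv_one])
  rwa [inv_le_comm hI one_ne_zero, inv_one] at hinv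

instance isMulTorsionFree : IsMulTorsionFree (FractionalIdeal A⁰ K) :=
  .mk' fun I _ J hJ n hn h ↦ by
    rw [← div_eq_one_iff_eq hJ]
    refine eq_one_of_pow_eq_one hn ?_
    rw [div_pow, h, div_self (pow_ne_zero n hJ)]

theorem exists_pow_eq_spanSingleton [Finite (ClassGroup A)] (I : FractionalIdeal A⁰ K) :
    ∃ n ≠ 0, ∃ a : K, I ^ n = spanSingleton A⁰ a := by
  rcases eq_or_ne I 0 with rfl | hI
  · exact ⟨1, one_ne_zero, 0, by simp⟩
  refine ⟨Nat.card (ClassGroup A), Nat.card_pos.ne', ?_⟩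
  obtain ⟨a, ha⟩ := ((ClassGroup.mk_eq_one_iff (I := Units.mk0 I hI ^ _)).1
    (by rw [map_pow, pow_card_eq_one'])).principal
  refine ⟨a, coeToSubmodule_injective ?_⟩
  simpa using ha

end DedekindDomain

section GaloisConjugate

variable {K : Type*} [Field K] [NumberField K]

/-- The Galois conjugate `σ(𝔟)` of a fractional ideal `𝔟`, encoded as the extension of `𝔟` along
the restriction of `σ` to `𝓞 K`. -/
def galoisConj (σ : Gal(K/ℚ)) : FractionalIdeal (𝓞 K)⁰ K →+* FractionalIdeal (𝓞 K)⁰ K :=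
  extendedHom' K (nonZeroDivisors_le_comap_nonZeroDivisors_of_injective
    (RingOfIntegers.mapRingEquiv (σ : K ≃+* K) : 𝓞 K →+* 𝓞 K) (RingEquiv.injective _))

theorem isLocalizationMap_mapRingEquiv (σ : Gal(K/ℚ))
    (h : (𝓞 K)⁰ ≤ (𝓞 K)⁰.comap (RingOfIntegers.mapRingEquiv (σ : K ≃+* K) : 𝓞 K →+* 𝓞 K)) :
    (IsLocalization.map K _ h : K →+* K) = σ :=
  IsLocalization.map_unique h _ fun _ ↦ rfl

theorem mem_galoisConj {σ : Gal(K/ℚ)} {𝔟 : FractionalIdeal (𝓞 K)⁰ K} {x : K} :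
    x ∈ galoisConj σ 𝔟 ↔ ∃ b ∈ 𝔟, σ b = x := by
  simp only [galoisConj, extendedHom'_apply, mem_extended_iff, isLocalizationMap_mapRingEquiv]
  refine ⟨fun hx ↦ ?_, fun ⟨b, hb, hbx⟩ ↦ Submodule.subset_span ⟨b, hb, hbx⟩⟩
  induction hx using Submodule.span_induction with
  | mem _ hx => exact hx
  | zero => exact ⟨0, 𝔟.zero_mem, map_zero σ⟩
  | add x y _ _ hx hy =>
    obtain ⟨b, hb, rfl⟩ := hx
    obtain ⟨c, hc, rfl⟩ := hy
    exact ⟨b + c, Submodule.add_mem _ hb hc, map_add σ b c⟩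
  | smul α x _ hx =>
    obtain ⟨b, hb, rfl⟩ := hx
    refine ⟨RingOfIntegers.mapRingEquiv (σ.symm : K ≃+* K) α • b, Submodule.smul_mem _ _ hb, ?_⟩
    simp [Algebra.smul_def]

theorem galoisConj_one (𝔟 : FractionalIdeal (𝓞 K)⁰ K) : galoisConj 1 𝔟 = 𝔟 := by
  ext x
  simp [mem_galoisConj]

theorem galoisConj_spanSingleton (σ : Gal(K/ℚ)) (x : K) :
    galoisConj σ (spanSingleton (𝓞 K)⁰ x) = spanSingleton (𝓞 K)⁰ (σ x) := by
  simp only [galoisConj, extendedHom'_apply, extended_spanSingleton, isLocalizationMap_mapRingEquiv]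
  rfl

theorem spanSingleton_ratCast_abs (q : ℚ) :
    spanSingleton (𝓞 K)⁰ ((|q| : ℚ) : K) = spanSingleton (𝓞 K)⁰ (q : K) := by
  rcases abs_choice q with h | h
  · rw [h]
  · exact spanSingleton_eq_spanSingleton.2 ⟨-1, by simp [h]⟩

theorem spanSingleton_ratCast_eq_one_iff {q : ℚ} :
    spanSingleton (𝓞 K)⁰ (q : K) = 1 ↔ |q| = 1 := by
  refine ⟨fun h ↦ ?_, fun h ↦ ?_⟩
  · have hn := congrArg absNorm h
    have hq : Algebra.norm ℚ (q : K) = q ^ Module.finrank ℚ K := Algebra.norm_algebraMap q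
    rw [absNorm_span_singleton, map_one, hq, abs_pow] at hn
    exact (pow_eq_one_iff_of_nonneg (abs_nonneg q) Module.finrank_pos.ne').1 hn
  · rw [← spanSingleton_ratCast_abs, h, Rat.cast_one, spanSingleton_one]

variable [IsGalois ℚ K]

theorem prod_galoisConj_spanSingleton (a : K) :
    ∏ σ : Gal(K/ℚ), galoisConj σ (spanSingleton (𝓞 K)⁰ a) =
      spanSingleton (𝓞 K)⁰ (absNorm (spanSingleton (𝓞 K)⁰ a) : K) := by
  have hnorm : ∏ σ : Gal(K/ℚ), σ a = (Algebra.norm ℚ a : K) :=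
    (Algebra.norm_eq_prod_automorphisms ℚ a).symm
  simp only [galoisConj_spanSingleton, absNorm_span_singleton, spanSingleton_ratCast_abs,
    ← spanSingleton_prod, hnorm]

theorem prod_galoisConj (𝔟 : FractionalIdeal (𝓞 K)⁰ K) :
    ∏ σ : Gal(K/ℚ), galoisConj σ 𝔟 = spanSingleton (𝓞 K)⁰ (absNorm 𝔟 : K) := by
  obtain ⟨n, hn, a, ha⟩ := exists_pow_eq_spanSingleton 𝔟
  refine pow_left_injective hn ?_
  calc (∏ σ : Gal(K/ℚ), galoisConj σ 𝔟) ^ n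
      = ∏ σ : Gal(K/ℚ), galoisConj σ (spanSingleton (𝓞 K)⁰ a) := by
        simp only [← Finset.prod_pow, ← map_pow, ha]
    _ = spanSingleton (𝓞 K)⁰ (absNorm 𝔟 : K) ^ n := by
        rw [prod_galoisConj_spanSingleton, ← ha, map_pow, Rat.cast_pow, spanSingleton_pow]

end GaloisConjugate

section Quadratic

variable {F K : Type*} [Field F] [Field K] [Algebra F K] [Algebra.IsQuadraticExtension F K]
  [IsGalois F K]

variable (F K) in
theorem existsUnique_galois_ne_one : ∃! σ : Gal(K/F), σ ≠ 1 := by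
  rw [← Nat.card_eq_two_iff' 1, IsGalois.card_aut_eq_finrank,
    Algebra.IsQuadraticExtension.finrank_eq_two]

theorem galois_eq_of_ne_one {σ τ : Gal(K/F)} (hσ : σ ≠ 1) (hτ : τ ≠ 1) : σ = τ :=
  (existsUnique_galois_ne_one F K).unique hσ hτ

theorem prod_galois_eq_mul {M : Type*} [CommMonoid M] {σ : Gal(K/F)} (hσ : σ ≠ 1)
    (f : Gal(K/F) → M) : ∏ τ, f τ = f 1 * f σ :=
  Fintype.prod_eq_mul 1 σ hσ.symm fun _ hτ ↦ (hτ.2 (galois_eq_of_ne_one hτ.1 hσ)).elim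

theorem algebraMap_norm_eq_mul {σ : Gal(K/F)} (hσ : σ ≠ 1) (x : K) :
    algebraMap F K (Algebra.norm F x) = x * σ x := by
  rw [Algebra.norm_eq_prod_automorphisms, prod_galois_eq_mul hσ, AlgEquiv.one_apply]

end Quadratic

section QuadraticField

variable {K : Type*} [Field K] [NumberField K] [Algebra.IsQuadraticExtension ℚ K] {σ : Gal(K/ℚ)}

theorem isConj_of_isEmpty_ringHom_real (hK : IsEmpty (K →+* ℝ)) (hσ : σ ≠ 1) (φ : K →+* ℂ) :
    ComplexEmbedding.IsConj φ σ := by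
  obtain ⟨τ, hτ⟩ := ComplexEmbedding.exists_comp_symm_eq_of_comp_eq (k := ℚ) φ
    (ComplexEmbedding.conjugate φ) (RingHom.ext_rat _ _)
  have hconj : ComplexEmbedding.IsConj φ τ.symm := hτ.symm
  have hne : τ.symm ≠ 1 := by
    intro h
    rw [h, ComplexEmbedding.isConj_one_iff] at hconj
    exact hK.false hconj.embedding
  rwa [galois_eq_of_ne_one hσ hne]

theorem norm_pos (hK : IsEmpty (K →+* ℝ)) {x : K} (hx : x ≠ 0) : 0 < Algebra.norm ℚ x := by
  obtain ⟨σ, hσ⟩ := (existsUnique_galois_ne_one ℚ K).exists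
  obtain ⟨φ⟩ : Nonempty (K →+* ℂ) := inferInstance
  have hφσ : φ (σ x) = starRingEnd ℂ (φ x) :=
    (isConj_of_isEmpty_ringHom_real hK hσ φ).eq x
  have hnorm : ((Algebra.norm ℚ x : ℝ) : ℂ) = Complex.normSq (φ x) := by
    rw [← Complex.mul_conj, ← hφσ, ← map_mul, ← algebraMap_norm_eq_mul hσ]
    simp
  have hpos : 0 < Complex.normSq (φ x) := Complex.normSq_pos.2 ((_root_.map_ne_zero φ).2 hx)
  rw [← Complex.ofReal_injective hnorm] at hpos
  exact_mod_cast hpos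

theorem mul_galoisConj (hσ : σ ≠ 1) (𝔟 : FractionalIdeal (𝓞 K)⁰ K) :
    𝔟 * galoisConj σ 𝔟 = spanSingleton (𝓞 K)⁰ (absNorm 𝔟 : K) := by
  rw [← prod_galoisConj, prod_galois_eq_mul hσ, galoisConj_one]

end QuadraticField

section Dual

variable {K : Type*} [Field K] [NumberField K]

/-- The dual of `𝔟` with respect to the sesquilinear form `(x, y) ↦ c * (x * σ y)`. -/
def dual (σ : Gal(K/ℚ)) (c : K) (𝔟 : FractionalIdeal (𝓞 K)⁰ K) : Set K :=
  {x | ∀ b ∈ 𝔟, ∃ α : 𝓞 K, algebraMap (𝓞 K) K α = c * (x * σ b)}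

theorem dual_eq_inv (σ : Gal(K/ℚ)) {c : K} (hc : c ≠ 0) {𝔟 : FractionalIdeal (𝓞 K)⁰ K}
    (h𝔟 : 𝔟 ≠ 0) : dual σ c 𝔟 = ↑(spanSingleton (𝓞 K)⁰ c * galoisConj σ 𝔟)⁻¹ := by
  have hne : spanSingleton (𝓞 K)⁰ c * galoisConj σ 𝔟 ≠ 0 :=
    mul_ne_zero (spanSingleton_ne_zero_iff.2 hc) ((_root_.map_ne_zero _).2 h𝔟)
  ext x
  simp only [dual, Set.mem_ofPred_eq, SetLike.mem_coe, mem_inv_iff hne, mem_singleton_mul,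
    mem_galoisConj, mem_one_iff]
  constructor
  · rintro hx _ ⟨_, ⟨b, hb, rfl⟩, rfl⟩
    rw [mul_left_comm]
    exact hx b hb
  · intro hx b hb
    rw [mul_left_comm]
    exact hx _ ⟨_, ⟨b, hb, rfl⟩, rfl⟩

theorem dual_eq_self_iff [Algebra.IsQuadraticExtension ℚ K] {σ : Gal(K/ℚ)} (hσ : σ ≠ 1) {c : ℚ}
    (hc : c ≠ 0) {𝔟 : FractionalIdeal (𝓞 K)⁰ K} (h𝔟 : 𝔟 ≠ 0) :
    dual σ (c : K) 𝔟 = 𝔟 ↔ |c| * absNorm 𝔟 = 1 := by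
  calc dual σ (c : K) 𝔟 = 𝔟
      ↔ (spanSingleton (𝓞 K)⁰ (c : K) * galoisConj σ 𝔟)⁻¹ = 𝔟 := by
        rw [dual_eq_inv σ (Rat.cast_ne_zero.2 hc) h𝔟, SetLike.coe_set_eq]
    _ ↔ spanSingleton (𝓞 K)⁰ ((c * absNorm 𝔟 : ℚ) : K) = 1 := by
        rw [inv_eq_iff_eq_inv, ← mul_eq_one_iff_eq_inv₀ h𝔟, mul_assoc, mul_comm _ 𝔟,
          mul_galoisConj hσ, spanSingleton_mul_spanSingleton, Rat.cast_mul]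
    _ ↔ |c| * absNorm 𝔟 = 1 := by
        rw [spanSingleton_ratCast_eq_one_iff, abs_mul, abs_of_nonneg (absNorm_nonneg 𝔟)]

end Dual

end SesquilinearDual

theorem fractional_ideal_selfdual_hermitian_form
    (K : Type*) [Field K] [NumberField K]
    (hdeg : Module.finrank ℚ K = 2) (himag : IsEmpty (K →+* ℝ))
    -- the nontrivial automorphism x ↦ conj x of K
    (σ : K →+* K) (hσσ : ∀ x : K, σ (σ x) = x) (hσne : σ ≠ RingHom.id K)
    -- the nonzero fractional ideal 𝔟 with absolute norm N(𝔟)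
    (𝔟 : FractionalIdeal (nonZeroDivisors (𝓞 K)) K) (h𝔟 : 𝔟 ≠ 0) :
    -- (a) the form takes values in O_k on 𝔟
    (∀ b₁ ∈ 𝔟, ∀ b₂ ∈ 𝔟, ∃ α : 𝓞 K,
        algebraMap (𝓞 K) K α = b₁ * σ b₂ / ((FractionalIdeal.absNorm 𝔟 : ℚ) : K)) ∧
      -- (b) positive definiteness
      (∀ b ∈ 𝔟, b ≠ (0 : K) → ∃ q : ℚ, 0 < q ∧
        (q : K) = b * σ b / ((FractionalIdeal.absNorm 𝔟 : ℚ) : K)) ∧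
      -- (c) self-duality
      (∀ x : K,
        (∀ b ∈ 𝔟, ∃ α : 𝓞 K,
          algebraMap (𝓞 K) K α = x * σ b / ((FractionalIdeal.absNorm 𝔟 : ℚ) : K)) ↔ x ∈ 𝔟) ∧
      -- uniqueness: any positive rational `c` making 𝔟 self-dual equals 1/N(𝔟)
      (∀ c : ℚ, 0 < c →
        (∀ x : K, (∀ b ∈ 𝔟, ∃ α : 𝓞 K,
          algebraMap (𝓞 K) K α = (c : K) * (x * σ b)) ↔ x ∈ 𝔟) →
        c = 1 / FractionalIdeal.absNorm 𝔟) := by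
  have : Algebra.IsQuadraticExtension ℚ K := ⟨hdeg⟩
  let τ : Gal(K/ℚ) := (RingEquiv.ofRingHom σ σ (RingHom.ext hσσ) (RingHom.ext hσσ)).toRatAlgEquiv
  have hτ : τ ≠ 1 := fun h ↦ hσne (RingHom.ext fun x ↦ DFunLike.congr_fun h x)
  have hN : 0 < FractionalIdeal.absNorm 𝔟 := (FractionalIdeal.absNorm_nonneg 𝔟).lt_of_ne'
    (FractionalIdeal.absNorm_eq_zero_iff.not.2 h𝔟)
  have hdual {c : ℚ} (hc : 0 < c) : (∀ x : K, (∀ b ∈ 𝔟, ∃ α : 𝓞 K,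
      algebraMap (𝓞 K) K α = c * (x * σ b)) ↔ x ∈ 𝔟) ↔ c * FractionalIdeal.absNorm 𝔟 = 1 :=
    calc _ ↔ SesquilinearDual.dual τ (c : K) 𝔟 = 𝔟 := Set.ext_iff.symm
      _ ↔ |c| * FractionalIdeal.absNorm 𝔟 = 1 :=
        SesquilinearDual.dual_eq_self_iff hτ hc.ne' h𝔟
      _ ↔ c * FractionalIdeal.absNorm 𝔟 = 1 := by rw [abs_of_pos hc]
  have hself := (hdual (inv_pos.2 hN)).2 (inv_mul_cancel₀ hN.ne')
  simp only [Rat.cast_inv, inv_mul_eq_div] at hself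
  refine ⟨fun b₁ hb₁ ↦ (hself b₁).2 hb₁, fun b _ hb0 ↦ ?_, hself, fun c hc h ↦ ?_⟩
  · refine ⟨Algebra.norm ℚ b / FractionalIdeal.absNorm 𝔟,
      div_pos (SesquilinearDual.norm_pos himag hb0) hN, ?_⟩
    rw [Rat.cast_div]
    exact congrArg (· / _) (SesquilinearDual.algebraMap_norm_eq_mul hτ b)
  · exact eq_one_div_of_mul_eq_one_left ((hdual hc).1 h)
end
end

section
/- Let k ⊂ ℂ be an imaginary quadratic field with ring of integers O_k. Let τ ∈ ℂ with Im(τ) ≠ 0 and suppose the ℤ-submodule Λ = ℤτ + ℤ of ℂ is stable under multiplication by O_k, i.e. αλ ∈ Λ for all α ∈ O_k and λ ∈ Λ. Then τ ∈ k, Λ ⊂ k, and Λ is a fractional O_k-ideal of k. -/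
/-!
Write `A` for the ring of integers. Since `[K : ℚ] ≠ 1`, some `α ∈ A` is not in `ℤ`. As `1 ∈ Λ`,
stability gives `α = aτ + b` with `a, b ∈ ℤ`; here `a ≠ 0`, so `τ = (α - b) / a` lies in `K`.
Being stable, `Λ = ℤτ + ℤ` is then the `A`-submodule of `K` generated by `τ` and `1`, and a
finitely generated `A`-submodule of the fraction field is a fractional ideal.
-/

noncomputable section

open NumberField

open Submodule (span)
open scoped nonZeroDivisors

theorem finrank_rat_eq_one_of_surjective_intCast {A K : Type*} [CommRing A] [Field K]
    [Algebra A K] [IsFractionRing A K] [Algebra ℚ K]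
    (hA : Function.Surjective (Int.cast : ℤ → A)) : Module.finrank ℚ K = 1 := by
  refine finrank_eq_one 1 one_ne_zero fun w => ?_
  obtain ⟨x, y, -, rfl⟩ := IsFractionRing.div_surjective (A := A) w
  obtain ⟨m, rfl⟩ := hA x
  obtain ⟨n, rfl⟩ := hA y
  exact ⟨m / n, by simp [Algebra.smul_def]⟩

theorem restrictScalars_span_eq_of_smul_mem {R A M : Type*} [Semiring R] [Semiring A]
    [AddCommMonoid M] [SMul R A] [Module R M] [Module A M] [IsScalarTower R A M] {s : Set M}
    (hs : ∀ α : A, ∀ x ∈ span R s, α • x ∈ span R s) :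
    (span A s).restrictScalars R = span R s := by
  refine le_antisymm (fun x hx => ?_) (Submodule.span_le_restrictScalars R A s)
  induction (hx : x ∈ span A s) using Submodule.span_induction with
  | mem x hx => exact Submodule.subset_span hx
  | zero => exact zero_mem _
  | add x y _ _ hx hy => exact add_mem hx hy
  | smul α x _ hx => exact hs α x hx

theorem mem_span_int_pair_one {L : Type*} [Ring L] {τ z : L} :
    z ∈ span ℤ {τ, 1} ↔ ∃ a b : ℤ, z = a * τ + b := by
  simp only [Submodule.mem_span_pair, zsmul_eq_mul, mul_one, eq_comm]

theorem image_span_int_pair_one {K L : Type*} [Ring K] [Ring L] (f : K →+* L) (t : K) :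
    f '' span ℤ {t, 1} = span ℤ {f t, 1} := by
  have h := Submodule.map_span f.toAddMonoidHom.toIntLinearMap {t, 1}
  simpa [Set.image_pair] using congrArg ((↑) : Submodule ℤ L → Set L) h

theorem exists_map_eq_of_map_mem_span_int_pair_one {K L : Type*} [DivisionRing K] [Ring L]
    [Nontrivial L] (f : K →+* L) {τ : L} {x : K} (hx : x ∉ Set.range (Int.cast : ℤ → K))
    (hxτ : f x ∈ span ℤ {τ, 1}) : ∃ t : K, f t = τ := by
  obtain ⟨a, b, hab⟩ := mem_span_int_pair_one.mp hxτ
  have ha : (a : K) ≠ 0 := by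
    intro ha
    have haL : (a : L) = 0 := by rw [← map_intCast f, ha, map_zero]
    exact hx ⟨b, f.injective (by rw [hab, haL, zero_mul, zero_add, map_intCast])⟩
  refine ⟨(a : K)⁻¹ * (x - b), ?_⟩
  calc f ((a : K)⁻¹ * (x - b)) = f (a : K)⁻¹ * (f a * τ) := by simp [hab]
    _ = τ := by rw [← mul_assoc, ← map_mul, inv_mul_cancel₀ ha, map_one, one_mul]

theorem lattice_stable_is_fractional_ideal_general {A K L : Type*} [CommRing A] [Field K]
    [Algebra A K] [IsFractionRing A K] [Ring L] [Nontrivial L] (emb : K →+* L) {τ : L}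
    (hA : ¬ Function.Surjective (Int.cast : ℤ → A))
    (hstable : ∀ α : A, ∀ z ∈ span ℤ {τ, 1}, emb (algebraMap A K α) * z ∈ span ℤ {τ, 1}) :
    (∃ t : K, emb t = τ) ∧
      (∀ z ∈ span ℤ {τ, 1}, ∃ x : K, emb x = z) ∧
      ∃ J : FractionalIdeal A⁰ K, ∀ z : L, (∃ x ∈ J, emb x = z) ↔ z ∈ span ℤ {τ, 1} := by
  obtain ⟨α, hα⟩ := not_forall.mp hA
  have hαK : algebraMap A K α ∉ Set.range (Int.cast : ℤ → K) := by
    rintro ⟨n, hn⟩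
    exact hα ⟨n, IsFractionRing.injective A K (by rw [map_intCast, hn])⟩
  obtain ⟨t, rfl⟩ := exists_map_eq_of_map_mem_span_int_pair_one emb hαK <| by
    simpa only [mul_one] using hstable α 1 (Submodule.subset_span (by simp))
  have himage : ∀ z, z ∈ span ℤ {emb t, 1} ↔ ∃ x ∈ span ℤ {t, 1}, emb x = z := fun z =>
    Set.ext_iff.mp (image_span_int_pair_one emb t).symm z
  have hspan : (span A {t, 1}).restrictScalars ℤ = span ℤ {t, 1} := by
    refine restrictScalars_span_eq_of_smul_mem fun β x hx => ?_
    obtain ⟨y, hy, hyx⟩ := (himage _).mp (hstable β _ ((himage _).mpr ⟨x, hx, rfl⟩))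
    rwa [Algebra.smul_def, ← emb.injective (hyx.trans (map_mul emb _ _).symm)]
  refine ⟨⟨t, rfl⟩, fun z hz => ?_, ⟨span A {t, 1}, ?_⟩, fun z => ?_⟩
  · obtain ⟨x, -, hx⟩ := (himage z).mp hz
    exact ⟨x, hx⟩
  · exact FractionalIdeal.isFractional_of_fg (Submodule.fg_span (Set.toFinite _))
  · rw [himage, ← hspan]
    exact Iff.rfl

theorem lattice_stable_is_fractional_ideal
    (K : Type*) [Field K] [NumberField K]
    (hdeg : Module.finrank ℚ K = 2) (himag : IsEmpty (K →+* ℝ))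
    (emb : K →+* ℂ)
    (τ : ℂ) (hτ : τ.im ≠ 0)
    (hstable : ∀ (α : 𝓞 K) (z : ℂ), (∃ a b : ℤ, z = (a : ℂ) * τ + (b : ℂ)) →
      ∃ a b : ℤ, emb (algebraMap (𝓞 K) K α) * z = (a : ℂ) * τ + (b : ℂ)) :
    (∃ t : K, emb t = τ) ∧
      (∀ z : ℂ, (∃ a b : ℤ, z = (a : ℂ) * τ + (b : ℂ)) → ∃ x : K, emb x = z) ∧
      ∃ J : FractionalIdeal (nonZeroDivisors (𝓞 K)) K,
        ∀ z : ℂ, (∃ x ∈ J, emb x = z) ↔ ∃ a b : ℤ, z = (a : ℂ) * τ + (b : ℂ) := by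
  simp only [← mem_span_int_pair_one] at hstable ⊢
  exact lattice_stable_is_fractional_ideal_general emb
    (fun hA => absurd (finrank_rat_eq_one_of_surjective_intCast (K := K) hA) (by omega)) hstable
end
end

section
/- Let 𝔟 be a nonzero fractional O_k-ideal of an imaginary quadratic field k, and let L₀ be an O_k-module equipped with a form ⟨·,·⟩ : L₀ × L₀ → O_k that is O_k-linear in the first variable and satisfies ⟨y,x⟩ = conj(⟨x,y⟩); extend ⟨·,·⟩ to k ⊗_{O_k} L₀, k-linear in the first variable and conjugate-linear in the second. Then for every β in 𝔟·L₀ (the set of finite sums ∑ bᵢxᵢ with bᵢ ∈ 𝔟 and xᵢ ∈ L₀, viewed inside k ⊗_{O_k} L₀), one has ⟨β,β⟩ ∈ N(𝔟)·ℤ. -/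
/-!
Statement 15: if `𝔟` is a nonzero fractional ideal of an imaginary quadratic field `k` and
`(L₀, ⟨⋅,⋅⟩)` is a hermitian `O_k`-module, then for every `β ∈ 𝔟 L₀ ⊆ k ⊗_{O_k} L₀` one has
`⟨β,β⟩ ∈ N(𝔟) ℤ`.
-/

noncomputable section

open NumberField

/-!
For `b ∈ 𝔟` one has `b O_K = 𝔟 J` with `J` integral, so the norm `b * σ b` lies in `N(𝔟) ℤ` by
multiplicativity of the ideal norm. Polarizing, `b * σ c + c * σ b ∈ N(𝔟) ℤ` for `b, c ∈ 𝔟`. A form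
that is additive in both variables takes diagonal values in a given group on a whole additive span
as soon as `⟨v, v⟩` and `⟨v, w⟩ + ⟨w, v⟩` are in that group for generators `v, w`. For `v = b x` and
`w = c y` the first is the norm of `b` times the integer `⟨x, x⟩`, and the second is the polarized
norm at `b ⟨x, y⟩ ∈ 𝔟` and `c ∈ 𝔟`.
-/

section Biadditive

lemma biadditive_mem_of_mem_closure {G H A : Type*} [AddGroup G] [AddGroup H] [AddCommGroup A]
    (B : G →+ H →+ A) (M : AddSubgroup A) {S : Set G} {T : Set H}
    (hB : ∀ v ∈ S, ∀ w ∈ T, B v w ∈ M) {v : G} (hv : v ∈ AddSubgroup.closure S) {w : H}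
    (hw : w ∈ AddSubgroup.closure T) : B v w ∈ M := by
  have hleft : ∀ w ∈ T, AddSubgroup.closure S ≤ M.comap (B.flip w) := fun w hw =>
    (AddSubgroup.closure_le _).2 fun v hv => hB v hv w hw
  have hright : AddSubgroup.closure T ≤ M.comap (B v) :=
    (AddSubgroup.closure_le _).2 fun w hw => hleft w hw hv
  exact hright hw

lemma biadditive_self_mem_of_mem_closure {G A : Type*} [AddGroup G] [AddCommGroup A]
    (B : G →+ G →+ A) (M : AddSubgroup A) {S : Set G} (hself : ∀ v ∈ S, B v v ∈ M)
    (hcross : ∀ v ∈ S, ∀ w ∈ S, B v w + B w v ∈ M) {v : G} (hv : v ∈ AddSubgroup.closure S) :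
    B v v ∈ M := by
  induction hv using AddSubgroup.closure_induction with
  | mem v hv => exact hself v hv
  | zero => simp
  | add v w hv hw ihv ihw =>
    have hvw : B v w + B w v ∈ M := biadditive_mem_of_mem_closure (B + B.flip) M hcross hv hw
    have hsum : B (v + w) (v + w) = B v v + B w w + (B v w + B w v) := by
      simp only [map_add, AddMonoidHom.add_apply]
      abel
    exact hsum ▸ add_mem (add_mem ihv ihw) hvw
  | neg v _ ih => simpa using ih

end Biadditive

section QuadraticExtension

variable {F K : Type*} [Field F] [Field K] [Algebra F K] [Algebra.IsQuadraticExtension F K]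
  [IsGalois F K]

lemma eq_one_or_eq_of_isQuadraticExtension {σ : Gal(K/F)} (hσ : σ ≠ 1) (τ : Gal(K/F)) :
    τ = 1 ∨ τ = σ := by
  have hcard : Nat.card Gal(K/F) = 2 := by
    rw [IsGalois.card_aut_eq_finrank, Algebra.IsQuadraticExtension.finrank_eq_two]
  have hunique : ∃! ρ : Gal(K/F), ρ ≠ 1 := (Nat.card_eq_two_iff' 1).1 hcard
  exact or_iff_not_imp_left.2 fun hτ => hunique.unique hτ hσ

lemma algebraMap_norm_eq_mul_conj {σ : Gal(K/F)} (hσ : σ ≠ 1) (x : K) :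
    algebraMap F K (Algebra.norm F x) = x * σ x := by
  classical
  have huniv : (Finset.univ : Finset Gal(K/F)) = {1, σ} := by
    ext τ
    simpa using eq_one_or_eq_of_isQuadraticExtension hσ τ
  rw [Algebra.norm_eq_prod_automorphisms, huniv, Finset.prod_pair hσ.symm, AlgEquiv.one_apply]

lemma exists_algebraMap_eq_of_isIntegral_of_conj_eq {A : Type*} [CommRing A] [IsIntegrallyClosed A]
    [Algebra A F] [IsFractionRing A F] [Algebra A K] [IsScalarTower A F K]
    {σ : Gal(K/F)} (hσ : σ ≠ 1) {x : K} (hint : IsIntegral A x) (hx : σ x = x) :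
    ∃ a : A, algebraMap A K a = x := by
  have hfixed : ∀ τ : Gal(K/F), τ x = x := fun τ => by
    obtain rfl | rfl := eq_one_or_eq_of_isQuadraticExtension hσ τ
    exacts [rfl, hx]
  obtain ⟨y, rfl⟩ := (IsGalois.mem_range_algebraMap_iff_fixed x).2 hfixed
  have hy : IsIntegral A y := (isIntegral_algebraMap_iff (algebraMap F K).injective).1 hint
  obtain ⟨a, rfl⟩ := IsIntegrallyClosed.isIntegral_iff.1 hy
  exact ⟨a, IsScalarTower.algebraMap_apply A F K a⟩

end QuadraticExtension

section IdealNorm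

open scoped nonZeroDivisors

lemma exists_eq_mul_coeIdeal_of_le {R K : Type*} [CommRing R] [IsDedekindDomain R] [Field K]
    [Algebra R K] [IsFractionRing R K] {I I' : FractionalIdeal R⁰ K} (hle : I' ≤ I) :
    ∃ J : Ideal R, I' = I * J := by
  obtain rfl | hI := eq_or_ne I 0
  · exact ⟨0, by simpa using hle⟩
  have hone : I⁻¹ * I' ≤ 1 := by
    rw [← inv_mul_cancel₀ hI]
    gcongr
  obtain ⟨J, hJ⟩ := FractionalIdeal.le_one_iff_exists_coeIdeal.1 hone
  exact ⟨J, by rw [hJ, mul_inv_cancel_left₀ hI]⟩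

lemma norm_mem_zmultiples_absNorm {R K : Type*} [CommRing R] [IsDedekindDomain R]
    [Module.Free ℤ R] [Module.Finite ℤ R] [Field K] [Algebra R K] [IsFractionRing R K]
    [IsLocalization (Algebra.algebraMapSubmonoid R ℤ⁰) K] [Algebra ℚ K] [Module.Finite ℚ K]
    (I : FractionalIdeal R⁰ K) {b : K} (hb : b ∈ I) :
    Algebra.norm ℚ b ∈ AddSubgroup.zmultiples I.absNorm := by
  obtain ⟨J, hJ⟩ := exists_eq_mul_coeIdeal_of_le
    (FractionalIdeal.spanSingleton_le_iff_mem.2 hb)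
  have habs : |Algebra.norm ℚ b| = Ideal.absNorm J • I.absNorm := by
    rw [← FractionalIdeal.absNorm_span_singleton R, hJ, map_mul, FractionalIdeal.coeIdeal_absNorm,
      nsmul_eq_mul, mul_comm]
  rw [← abs_mem_iff, habs]
  exact nsmul_mem (AddSubgroup.mem_zmultiples _) _

variable {K : Type*} [Field K] [NumberField K] [Algebra.IsQuadraticExtension ℚ K]

lemma mul_conj_mem_zmultiples_absNorm {σ : Gal(K/ℚ)} (hσ : σ ≠ 1)
    (I : FractionalIdeal (𝓞 K)⁰ K) {b : K} (hb : b ∈ I) :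
    b * σ b ∈ AddSubgroup.zmultiples ((I.absNorm : ℚ) : K) := by
  obtain ⟨m, hm⟩ := AddSubgroup.mem_zmultiples_iff.1 (norm_mem_zmultiples_absNorm I hb)
  rw [← algebraMap_norm_eq_mul_conj hσ, ← hm, map_zsmul, eq_ratCast]
  exact zsmul_mem (AddSubgroup.mem_zmultiples _) m

lemma mul_conj_add_mul_conj_mem_zmultiples_absNorm {σ : Gal(K/ℚ)} (hσ : σ ≠ 1)
    (I : FractionalIdeal (𝓞 K)⁰ K) {b c : K} (hb : b ∈ I) (hc : c ∈ I) :
    b * σ c + c * σ b ∈ AddSubgroup.zmultiples ((I.absNorm : ℚ) : K) := by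
  have hpolar : b * σ c + c * σ b = (b + c) * σ (b + c) - b * σ b - c * σ c := by
    rw [map_add]
    ring
  have hbc : b + c ∈ I := add_mem (S := Submodule (𝓞 K) K) hb hc
  rw [hpolar]
  exact sub_mem (sub_mem (mul_conj_mem_zmultiples_absNorm hσ I hbc)
    (mul_conj_mem_zmultiples_absNorm hσ I hb)) (mul_conj_mem_zmultiples_absNorm hσ I hc)

end IdealNorm

section HermitianForm

variable {K : Type*} [Field K] [NumberField K] [Algebra.IsQuadraticExtension ℚ K]
  {V : Type*} [AddCommGroup V] [Module K V]

lemma sesquilinear_smul_self_mem_zmultiples_absNorm {σ : Gal(K/ℚ)} (hσ : σ ≠ 1)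
    (I : FractionalIdeal (nonZeroDivisors (𝓞 K)) K) (H : V →ₗ[K] V →ₛₗ[(σ : K →+* K)] K)
    {b : K} (hb : b ∈ I) {x : V} (hint : IsIntegral ℤ (H x x)) (hherm : σ (H x x) = H x x) :
    H (b • x) (b • x) ∈ AddSubgroup.zmultiples ((I.absNorm : ℚ) : K) := by
  obtain ⟨m, hm⟩ := exists_algebraMap_eq_of_isIntegral_of_conj_eq hσ hint hherm
  have hnorm : H (b • x) (b • x) = m • (b * σ b) := by
    simp only [map_smul, LinearMap.smul_apply, LinearMap.map_smulₛₗ, ← hm, smul_eq_mul,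
      zsmul_eq_mul, eq_intCast, RingHom.coe_coe]
    ring
  exact hnorm ▸ zsmul_mem (mul_conj_mem_zmultiples_absNorm hσ I hb) m

lemma sesquilinear_smul_add_flip_mem_zmultiples_absNorm {σ : Gal(K/ℚ)} (hσ : σ ≠ 1)
    (I : FractionalIdeal (nonZeroDivisors (𝓞 K)) K) (H : V →ₗ[K] V →ₛₗ[(σ : K →+* K)] K)
    {b c : K} (hb : b ∈ I) (hc : c ∈ I) {x y : V} (hint : IsIntegral ℤ (H x y))
    (hherm : H y x = σ (H x y)) :
    H (b • x) (c • y) + H (c • y) (b • x) ∈ AddSubgroup.zmultiples ((I.absNorm : ℚ) : K) := by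
  have hbxy : H x y * b ∈ I := (I : Submodule (𝓞 K) K).smul_mem (⟨H x y, hint⟩ : 𝓞 K) hb
  have hpolar : H (b • x) (c • y) + H (c • y) (b • x) =
      H x y * b * σ c + c * σ (H x y * b) := by
    simp only [map_smul, LinearMap.smul_apply, LinearMap.map_smulₛₗ, hherm, smul_eq_mul,
      map_mul, RingHom.coe_coe]
    ring
  exact hpolar ▸ mul_conj_add_mul_conj_mem_zmultiples_absNorm hσ I hbxy hc

theorem herm_norm_in_ideal_norm_mul_int_general {σ : K →+* K} (hσ : σ ≠ RingHom.id K)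
    (I : FractionalIdeal (nonZeroDivisors (𝓞 K)) K) (H : V →ₗ[K] V →ₛₗ[σ] K)
    {X : Type*} (ι : X → V) (hint : ∀ x y, IsIntegral ℤ (H (ι x) (ι y)))
    (hherm : ∀ x y, H (ι y) (ι x) = σ (H (ι x) (ι y))) :
    ∀ β ∈ AddSubgroup.closure {v : V | ∃ b ∈ I, ∃ x : X, v = b • ι x},
      ∃ m : ℤ, H β β = ((I.absNorm : ℚ) : K) * (m : K) := by
  obtain ⟨τ, rfl⟩ : ∃ τ : Gal(K/ℚ), (τ : K →+* K) = σ :=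
    ⟨(Algebra.IsAlgebraic.algEquivEquivAlgHom ℚ K).symm σ.toRatAlgHom, rfl⟩
  have hτ : τ ≠ 1 := fun h => hσ (h ▸ rfl)
  intro β hβ
  have hmem : H β β ∈ AddSubgroup.zmultiples ((I.absNorm : ℚ) : K) := by
    refine biadditive_self_mem_of_mem_closure (LinearMap.toAddMonoidHom'.comp H.toAddMonoidHom) _
      ?_ ?_ hβ
    · rintro _ ⟨b, hb, x, rfl⟩
      exact sesquilinear_smul_self_mem_zmultiples_absNorm hτ I H hb (hint x x) (hherm x x).symm
    · rintro _ ⟨b, hb, x, rfl⟩ _ ⟨c, hc, y, rfl⟩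
      exact sesquilinear_smul_add_flip_mem_zmultiples_absNorm hτ I H hb hc (hint x y) (hherm x y)
  obtain ⟨m, hm⟩ := AddSubgroup.mem_zmultiples_iff.1 hmem
  exact ⟨m, by rw [← hm, zsmul_eq_mul, mul_comm]⟩

end HermitianForm

theorem herm_norm_in_ideal_norm_mul_int
    (K : Type*) [Field K] [NumberField K]
    (hdeg : Module.finrank ℚ K = 2) (himag : IsEmpty (K →+* ℝ))
    -- the nontrivial automorphism x ↦ conj x of K
    (σ : K →+* K) (hσσ : ∀ x : K, σ (σ x) = x) (hσne : σ ≠ RingHom.id K)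
    -- the nonzero fractional ideal 𝔟
    (𝔟 : FractionalIdeal (nonZeroDivisors (𝓞 K)) K) (h𝔟 : 𝔟 ≠ 0)
    -- the hermitian O_k-module (L₀, h)
    (L₀ : Type*) [AddCommGroup L₀] [Module (𝓞 K) L₀]
    (h : L₀ → L₀ → 𝓞 K)
    (hadd : ∀ x x' y : L₀, h (x + x') y = h x y + h x' y)
    (hsmul : ∀ (a : 𝓞 K) (x y : L₀), h (a • x) y = a * h x y)
    (hherm : ∀ x y : L₀,
      algebraMap (𝓞 K) K (h y x) = σ (algebraMap (𝓞 K) K (h x y)))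
    -- V = k ⊗_{O_k} L₀, with the extension H of h (k-linear in the first variable,
    -- conjugate-linear in the second)
    (V : Type*) [AddCommGroup V] [Module K V]
    (ι : L₀ → V) (hι : ∀ x y : L₀, ι (x + y) = ι x + ι y)
    (hιsmul : ∀ (a : 𝓞 K) (x : L₀), ι (a • x) = algebraMap (𝓞 K) K a • ι x)
    (H : V → V → K)
    (Hadd₁ : ∀ v v' w : V, H (v + v') w = H v w + H v' w)
    (Hadd₂ : ∀ v w w' : V, H v (w + w') = H v w + H v w')
    (Hsmul₁ : ∀ (a : K) (v w : V), H (a • v) w = a * H v w)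
    (Hsmul₂ : ∀ (a : K) (v w : V), H v (a • w) = σ a * H v w)
    (Hcompat : ∀ x y : L₀, H (ι x) (ι y) = algebraMap (𝓞 K) K (h x y)) :
    -- conclusion: ⟨β,β⟩ ∈ N(𝔟) ℤ for every β ∈ 𝔟 L₀
    ∀ β ∈ AddSubgroup.closure {v : V | ∃ b ∈ 𝔟, ∃ x : L₀, v = b • ι x},
      ∃ m : ℤ, H β β = ((FractionalIdeal.absNorm 𝔟 : ℚ) : K) * (m : K) := by
  have : Algebra.IsQuadraticExtension ℚ K := ⟨hdeg⟩
  exact herm_norm_in_ideal_norm_mul_int_general hσne 𝔟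
    (LinearMap.mk₂'ₛₗ (RingHom.id K) σ H Hadd₁ Hsmul₁ Hadd₂ Hsmul₂) ι
    (fun x y => by simpa [Hcompat] using (h x y).isIntegral_coe)
    (fun x y => by simpa [Hcompat] using hherm x y)
end
end
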